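/- Let g : ∂𝔻 → ℂ be continuous and log-Dini continuous. Then for every R ∈ (0, 3/4) and every integer n ≥ 0, the integral Iₙ := (1/π) · ∫₀^R (log(1/x))ⁿ · [ ∫₀^π ω_g(τ) / (x² + (τ/π)²) dτ ] dx is finite. -/

import Mathlib

/-!
Write `ω = omegaMod g` and `L(x) = log (1/x)`. Continuity of `g` on the compact circle makes `ω`
finite, hence monotone and subadditive, so `ω (π s) ≤ 4 ω s`. Rescaling `τ = π s` therefore bounds
the inner integral by `4 π ∫₀¹ ω(s) / (x² + s²) ds`.

For `x, s ∈ (0, 1)` the identity `L(x) = L(s) + log (s/x)` and `(log t)ⁿ ≤ 2ⁿ n! t^{1/2}` for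
`t ≥ 1` give `L(x)ⁿ ≤ A (L(s)ⁿ + (x/s)^{-1/2})` (`log_pow_bound`). Hence, with the integrable
profile `G(y) = (1 + y^{-1/2}) / (y² + 1)` on `(0, ∞)`,
`L(x)ⁿ / (x² + s²) ≤ A (L(s)ⁿ + 1) s⁻² G(x/s)` (`kernel_bound`).
Tonelli and the scaling `x = s y` bound the integral by a constant times
`(∫ G) ∫₀¹ (L(s)ⁿ + 1) ω(s) / s ds`, which is finite by the log-Dini hypothesis for `n` and `0`.
-/

open MeasureTheory

/-- The modulus of continuity of a function `g` on the unit circle,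
parametrized by the angle: `ω_g(δ) = sup {|g(e^{iθ}) - g(e^{iφ})| : |θ - φ| ≤ δ}`. -/
noncomputable def omegaMod (g : ℂ → ℂ) (δ : ℝ) : ℝ :=
  sSup {d : ℝ | ∃ θ φ : ℝ, |θ - φ| ≤ δ ∧
    d = ‖g (Complex.exp (θ * Complex.I)) - g (Complex.exp (φ * Complex.I))‖}

/-- A function `g` on the unit circle is log-Dini continuous if
`∫₀¹ (log(1/x))ⁿ ω_g(x)/x dx < ∞` for every integer `n ≥ 0`. -/
def LogDini (g : ℂ → ℂ) : Prop :=
  ∀ n : ℕ, ∫⁻ x in Set.Ioo (0:ℝ) 1,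
    ENNReal.ofReal ((Real.log (1/x)) ^ n * omegaMod g x / x) ≠ ⊤

/-! ### The modulus of continuity -/

lemma omegaMod_bddAbove {g : ℂ → ℂ} (hg : ContinuousOn g (Metric.sphere (0:ℂ) 1)) (δ : ℝ) :
    BddAbove {d : ℝ | ∃ θ φ : ℝ, |θ - φ| ≤ δ ∧
      d = ‖g (Complex.exp (θ * Complex.I)) - g (Complex.exp (φ * Complex.I))‖} := by
  obtain ⟨C, hC⟩ := (isCompact_sphere (0:ℂ) 1).exists_bound_of_continuousOn hg
  have key (θ : ℝ) : ‖g (Complex.exp (θ * Complex.I))‖ ≤ C :=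
    hC _ (by simp [Complex.norm_exp_ofReal_mul_I])
  refine ⟨C + C, ?_⟩
  rintro d ⟨θ, φ, -, rfl⟩
  exact (norm_sub_le _ _).trans (add_le_add (key θ) (key φ))

lemma omegaMod_nonneg (g : ℂ → ℂ) (δ : ℝ) : 0 ≤ omegaMod g δ := by
  refine Real.sSup_nonneg ?_
  rintro d ⟨θ, φ, -, rfl⟩
  exact norm_nonneg _

lemma norm_sub_le_omegaMod {g : ℂ → ℂ} (hg : ContinuousOn g (Metric.sphere (0:ℂ) 1))
    {δ θ φ : ℝ} (h : |θ - φ| ≤ δ) :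
    ‖g (Complex.exp (θ * Complex.I)) - g (Complex.exp (φ * Complex.I))‖ ≤ omegaMod g δ :=
  le_csSup (omegaMod_bddAbove hg δ) ⟨θ, φ, h, rfl⟩

/-- Monotonicity holds on all of `ℝ`: for negative `δ` the supremum is over the empty set and
takes the junk value `0`. -/
lemma omegaMod_mono {g : ℂ → ℂ} (hg : ContinuousOn g (Metric.sphere (0:ℂ) 1)) :
    Monotone (omegaMod g) := by
  intro a b hab
  refine Real.sSup_le ?_ (omegaMod_nonneg g b)
  rintro d ⟨θ, φ, h, rfl⟩
  exact norm_sub_le_omegaMod hg (h.trans hab)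

lemma omegaMod_two_mul {g : ℂ → ℂ} (hg : ContinuousOn g (Metric.sphere (0:ℂ) 1)) (δ : ℝ) :
    omegaMod g (2 * δ) ≤ 2 * omegaMod g δ := by
  refine Real.sSup_le ?_ (by have := omegaMod_nonneg g δ; positivity)
  rintro d ⟨θ, φ, h, rfl⟩
  -- Compare both values with the one at the midpoint of `θ` and `φ`.
  have h1 : |θ - (θ + φ) / 2| ≤ δ := by
    rw [abs_le] at h ⊢; constructor <;> linarith [h.1, h.2]
  have h2 : |(θ + φ) / 2 - φ| ≤ δ := by
    rw [abs_le] at h ⊢; constructor <;> linarith [h.1, h.2]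
  have := norm_sub_le_norm_sub_add_norm_sub (g (Complex.exp (θ * Complex.I)))
    (g (Complex.exp (((θ + φ) / 2 : ℝ) * Complex.I))) (g (Complex.exp (φ * Complex.I)))
  linarith [norm_sub_le_omegaMod hg h1, norm_sub_le_omegaMod hg h2]

lemma omegaMod_pi_mul {g : ℂ → ℂ} (hg : ContinuousOn g (Metric.sphere (0:ℂ) 1)) {s : ℝ}
    (hs : 0 ≤ s) : omegaMod g (Real.pi * s) ≤ 4 * omegaMod g s := by
  have h1 : omegaMod g (Real.pi * s) ≤ omegaMod g (2 * (2 * s)) :=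
    omegaMod_mono hg (by nlinarith [Real.pi_le_four])
  linarith [omegaMod_two_mul hg (2 * s), omegaMod_two_mul hg s]

/-! ### Scaling and the integrable profile -/

lemma lintegral_Ioo_scale (f : ℝ → ENNReal) {c : ℝ} (hc : 0 < c) (b : ℝ) :
    ∫⁻ x in Set.Ioo 0 (c * b), f x = ENNReal.ofReal c * ∫⁻ y in Set.Ioo 0 b, f (c * y) := by
  have himg : (fun y => c * y) '' Set.Ioo 0 b = Set.Ioo 0 (c * b) := by
    rw [Set.image_mul_left_Ioo hc, mul_zero]
  rw [← himg, lintegral_image_eq_lintegral_abs_deriv_mul (f' := fun _ => c) measurableSet_Ioo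
    (fun x _ => by simpa using ((hasDerivAt_id x).const_mul c).hasDerivWithinAt)
    (fun x _ y _ h => mul_left_cancel₀ hc.ne' h), abs_of_pos hc]
  exact lintegral_const_mul' _ _ ENNReal.ofReal_ne_top

/-- The dilation-invariant majorant of the kernel, as a function of `y = x / s`. -/
noncomputable def profile (y : ℝ) : ℝ := (1 + y ^ (-(1/2) : ℝ)) / (y ^ 2 + 1)

lemma measurable_profile : Measurable profile := by
  unfold profile; fun_prop

lemma profile_lintegral : ∫⁻ y in Set.Ioi (0:ℝ), ENNReal.ofReal (profile y) ≠ ⊤ := by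
  have hI : IntegrableOn profile (Set.Ioi 0) := by
    rw [← Set.Ioc_union_Ioi_eq_Ioi (zero_le_one (α := ℝ))]
    refine IntegrableOn.union ?_ ?_
    · have h : IntegrableOn (fun y : ℝ => 2 * y ^ (-(1/2) : ℝ)) (Set.Ioc 0 1) :=
        ((intervalIntegrable_iff_integrableOn_Ioc_of_le zero_le_one).1
          (intervalIntegral.intervalIntegrable_rpow' (by norm_num))).const_mul 2
      refine h.mono' measurable_profile.aestronglyMeasurable ?_
      refine (ae_restrict_iff' measurableSet_Ioc).2 (.of_forall fun y hy => ?_)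
      have hy0 : 0 < y := hy.1
      have h1 : 1 ≤ y ^ (-(1/2) : ℝ) :=
        Real.one_le_rpow_of_pos_of_le_one_of_nonpos hy.1 hy.2 (by norm_num)
      rw [Real.norm_of_nonneg (by unfold profile; positivity)]
      unfold profile
      rw [div_le_iff₀ (by positivity)]
      nlinarith [sq_nonneg y]
    · have h : IntegrableOn (fun y : ℝ => 2 * y ^ (-2 : ℝ)) (Set.Ioi 1) :=
        (integrableOn_Ioi_rpow_of_lt (by norm_num) one_pos).const_mul 2
      refine h.mono' measurable_profile.aestronglyMeasurable ?_
      refine (ae_restrict_iff' measurableSet_Ioi).2 (.of_forall fun y hy => ?_)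
      have hy1 : 1 < y := hy
      have hy0 : 0 < y := by linarith
      have h1 : y ^ (-(1/2) : ℝ) ≤ 1 :=
        Real.rpow_le_one_of_one_le_of_nonpos hy1.le (by norm_num)
      rw [Real.norm_of_nonneg (by unfold profile; positivity)]
      unfold profile
      have h2 : y ^ (-2 : ℝ) = 1 / y ^ 2 := by
        rw [Real.rpow_neg hy0.le]; norm_num
      rw [h2, mul_one_div]
      exact div_le_div₀ (by norm_num) (by linarith) (by positivity) (by linarith)
  exact hI.lintegral_lt_top.ne

lemma profile_scaled {s : ℝ} (hs : 0 < s) :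
    ∫⁻ x in Set.Ioo (0:ℝ) 1, ENNReal.ofReal (s⁻¹ * profile (x / s)) ≤
      ∫⁻ y in Set.Ioi (0:ℝ), ENNReal.ofReal (profile y) := by
  have h := lintegral_Ioo_scale (fun x => ENNReal.ofReal (s⁻¹ * profile (x / s))) hs s⁻¹
  rw [mul_inv_cancel₀ hs.ne'] at h
  rw [h, ← lintegral_const_mul' _ _ ENNReal.ofReal_ne_top]
  refine (lintegral_mono fun y => ?_).trans (lintegral_mono_set Set.Ioo_subset_Ioi_self)
  rw [← ENNReal.ofReal_mul hs.le, mul_div_cancel_left₀ _ hs.ne', mul_inv_cancel_left₀ hs.ne']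

/-! ### Logarithmic estimates -/

lemma log_pow_le_sqrt (n : ℕ) {t : ℝ} (ht : 1 ≤ t) :
    Real.log t ^ n ≤ 2 ^ n * n.factorial * t ^ (1/2 : ℝ) := by
  have h := Real.pow_div_factorial_le_exp (Real.log t / 2)
    (by have := Real.log_nonneg ht; positivity) n
  rw [div_le_iff₀ (by positivity), div_pow, div_le_iff₀ (by positivity)] at h
  rw [Real.rpow_def_of_pos (by linarith), ← div_eq_mul_one_div]
  linarith

lemma log_pow_bound (n : ℕ) {x s : ℝ} (hx : x ∈ Set.Ioo (0:ℝ) 1) (hs : s ∈ Set.Ioo (0:ℝ) 1) :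
    Real.log (1/x) ^ n ≤ 2 ^ (n - 1) * (2 ^ n * n.factorial) *
      (Real.log (1/s) ^ n + (x / s) ^ (-(1/2) : ℝ)) := by
  have hx0 := hx.1
  have hs0 := hs.1
  have hLs : 0 ≤ Real.log (1/s) := Real.log_nonneg (by rw [le_div_iff₀ hs0]; linarith [hs.2])
  have hLx : 0 ≤ Real.log (1/x) := Real.log_nonneg (by rw [le_div_iff₀ hx0]; linarith [hx.2])
  have hr : 0 ≤ (x / s) ^ (-(1/2) : ℝ) := by positivity
  have h1 : (1:ℝ) ≤ 2 ^ (n - 1) := one_le_pow₀ (by norm_num)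
  have h2 : (1:ℝ) ≤ 2 ^ n * n.factorial :=
    one_le_mul_of_one_le_of_one_le (one_le_pow₀ (by norm_num))
      (by exact_mod_cast n.factorial_pos)
  rcases le_total s x with h | h
  · have : Real.log (1/x) ^ n ≤ Real.log (1/s) ^ n :=
      pow_le_pow_left₀ hLx (Real.log_le_log (by positivity)
        (one_div_le_one_div_of_le hs0 h)) n
    refine (this.trans (le_add_of_nonneg_right hr)).trans ?_
    exact le_mul_of_one_le_left (by positivity) (one_le_mul_of_one_le_of_one_le h1 h2)
  · have ht : 1 ≤ s / x := by rwa [le_div_iff₀ hx0, one_mul]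
    have hsplit : Real.log (1/x) = Real.log (1/s) + Real.log (s/x) := by
      rw [← Real.log_mul (by positivity) (by positivity)]
      congr 1; field_simp
    have hrw : (s / x) ^ (1/2 : ℝ) = (x / s) ^ (-(1/2) : ℝ) := by
      rw [Real.rpow_neg (by positivity), ← Real.inv_rpow (by positivity), inv_div]
    have h3 := log_pow_le_sqrt n ht
    rw [hrw] at h3
    rw [hsplit, mul_assoc]
    refine (add_pow_le hLs (Real.log_nonneg ht) n).trans ?_
    refine mul_le_mul_of_nonneg_left ?_ (by positivity)
    rw [mul_add]
    exact add_le_add (le_mul_of_one_le_left (by positivity) h2) h3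

lemma kernel_bound (n : ℕ) {x s : ℝ} (hx : x ∈ Set.Ioo (0:ℝ) 1) (hs : s ∈ Set.Ioo (0:ℝ) 1) :
    Real.log (1/x) ^ n / (x ^ 2 + s ^ 2) ≤ 2 ^ (n - 1) * (2 ^ n * n.factorial) *
      ((Real.log (1/s) ^ n + 1) / s * (s⁻¹ * profile (x / s))) := by
  have hx0 := hx.1
  have hs0 := hs.1
  have hLs : 0 ≤ Real.log (1/s) ^ n :=
    pow_nonneg (Real.log_nonneg (by rw [le_div_iff₀ hs0]; linarith [hs.2])) n
  have hr : 0 ≤ (x / s) ^ (-(1/2) : ℝ) := by positivity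
  have h := log_pow_bound n hx hs
  have e : (Real.log (1/s) ^ n + 1) / s * (s⁻¹ * profile (x / s)) =
      (Real.log (1/s) ^ n + 1) * (1 + (x / s) ^ (-(1/2) : ℝ)) / (x ^ 2 + s ^ 2) := by
    unfold profile
    generalize (x / s) ^ (-(1/2) : ℝ) = r
    field_simp
  rw [e, ← mul_div_assoc]
  refine div_le_div_of_nonneg_right (h.trans ?_) (by positivity)
  refine mul_le_mul_of_nonneg_left ?_ (by positivity)
  nlinarith [mul_nonneg hLs hr]

/-! ### Finiteness of the integral -/

lemma logDini_add_one {g : ℂ → ℂ} (hLD : LogDini g) (n : ℕ)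
    (hm : Measurable (omegaMod g)) :
    ∫⁻ s in Set.Ioo (0:ℝ) 1,
      ENNReal.ofReal (omegaMod g s * ((Real.log (1/s) ^ n + 1) / s)) ≠ ⊤ := by
  refine ne_top_of_le_ne_top (ENNReal.add_ne_top.2 ⟨hLD n, hLD 0⟩) ?_
  rw [← lintegral_add_left (by fun_prop)]
  refine lintegral_mono fun s => ?_
  refine le_trans (le_of_eq ?_) ENNReal.ofReal_add_le
  congr 1
  ring

/-- If `g` is continuous and log-Dini continuous on the unit circle, then
for every `R ∈ (0, 3/4)` and every `n ≥ 0` the integral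
`Iₙ = (1/π)∫₀^R (log(1/x))ⁿ [∫₀^π ω_g(τ)/(x² + (τ/π)²) dτ] dx` is finite. -/
theorem stmt11 (g : ℂ → ℂ) (hg : ContinuousOn g (Metric.sphere (0:ℂ) 1))
    (hLD : LogDini g) (R : ℝ) (hR : R ∈ Set.Ioo (0:ℝ) (3/4)) (n : ℕ) :
    ENNReal.ofReal (1 / Real.pi) *
      ∫⁻ x in Set.Ioo (0:ℝ) R, ENNReal.ofReal ((Real.log (1/x)) ^ n) *
        ∫⁻ τ in Set.Ioo (0:ℝ) Real.pi,
          ENNReal.ofReal (omegaMod g τ / (x ^ 2 + (τ / Real.pi) ^ 2)) ≠ ⊤ := by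
  have hm : Measurable (omegaMod g) := (omegaMod_mono hg).measurable
  have hmp := measurable_profile
  have hπ := Real.pi_pos
  set A : ℝ := 2 ^ (n - 1) * (2 ^ n * n.factorial) with hA
  have hA0 : 0 ≤ A := by positivity
  let W : ℝ → ENNReal := fun s =>
    ENNReal.ofReal (omegaMod g s * ((Real.log (1/s) ^ n + 1) / s))
  let P : ℝ → ℝ → ENNReal := fun x s => ENNReal.ofReal (s⁻¹ * profile (x / s))
  have hW : Measurable W := by fun_prop
  refine ENNReal.mul_ne_top ENNReal.ofReal_ne_top ?_
  have step : ∀ x ∈ Set.Ioo (0:ℝ) R, ENNReal.ofReal ((Real.log (1/x)) ^ n) *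
        ∫⁻ τ in Set.Ioo (0:ℝ) Real.pi,
          ENNReal.ofReal (omegaMod g τ / (x ^ 2 + (τ / Real.pi) ^ 2)) ≤
      ENNReal.ofReal (Real.pi * (4 * A)) * ∫⁻ s in Set.Ioo (0:ℝ) 1, W s * P x s := by
    intro x hx
    have hx1 : x ∈ Set.Ioo (0:ℝ) 1 := ⟨hx.1, by linarith [hx.2, hR.2]⟩
    have hLx : 0 ≤ Real.log (1/x) ^ n :=
      pow_nonneg (Real.log_nonneg (by rw [le_div_iff₀ hx1.1]; linarith [hx1.2])) n
    have hsc := lintegral_Ioo_scale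
      (fun τ => ENNReal.ofReal (omegaMod g τ / (x ^ 2 + (τ / Real.pi) ^ 2))) hπ 1
    rw [mul_one] at hsc
    rw [hsc, ENNReal.ofReal_mul hπ.le, mul_left_comm, mul_assoc]
    refine mul_le_mul_right ?_ _
    rw [← lintegral_const_mul' _ _ ENNReal.ofReal_ne_top,
      ← lintegral_const_mul' _ _ ENNReal.ofReal_ne_top]
    refine setLIntegral_mono' measurableSet_Ioo fun s hs => ?_
    have hs0 := hs.1
    have hω := omegaMod_nonneg g s
    have hLs : 0 ≤ Real.log (1/s) ^ n :=
      pow_nonneg (Real.log_nonneg (by rw [le_div_iff₀ hs0]; linarith [hs.2])) n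
    simp only [W, P]
    rw [← ENNReal.ofReal_mul hLx, ← ENNReal.ofReal_mul (by positivity),
      ← ENNReal.ofReal_mul (by positivity), mul_div_cancel_left₀ _ hπ.ne']
    refine ENNReal.ofReal_le_ofReal ?_
    have hk := kernel_bound n hx1 hs
    have hx0 := hx1.1
    calc Real.log (1/x) ^ n * (omegaMod g (Real.pi * s) / (x ^ 2 + s ^ 2))
        ≤ Real.log (1/x) ^ n * (4 * omegaMod g s / (x ^ 2 + s ^ 2)) := by
          have := omegaMod_pi_mul hg hs0.le
          gcongr
      _ = 4 * omegaMod g s * (Real.log (1/x) ^ n / (x ^ 2 + s ^ 2)) := by ring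
      _ ≤ 4 * omegaMod g s * (A *
            ((Real.log (1/s) ^ n + 1) / s * (s⁻¹ * profile (x / s)))) := by
          gcongr
      _ = _ := by ring
  have bound : ∫⁻ x in Set.Ioo (0:ℝ) 1, ∫⁻ s in Set.Ioo (0:ℝ) 1, W s * P x s ≤
      (∫⁻ s in Set.Ioo (0:ℝ) 1, W s) * ∫⁻ y in Set.Ioi (0:ℝ), ENNReal.ofReal (profile y) := by
    rw [lintegral_lintegral_swap (by
      apply Measurable.aemeasurable
      simp only [Function.uncurry_def, P]
      fun_prop), ← lintegral_mul_const _ hW]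
    refine setLIntegral_mono' measurableSet_Ioo fun s hs => ?_
    rw [lintegral_const_mul' _ _ ENNReal.ofReal_ne_top]
    exact mul_le_mul_right (profile_scaled hs.1) _
  refine ne_top_of_le_ne_top ?_ (setLIntegral_mono' measurableSet_Ioo step)
  rw [lintegral_const_mul' _ _ ENNReal.ofReal_ne_top]
  refine ENNReal.mul_ne_top ENNReal.ofReal_ne_top ?_
  refine ne_top_of_le_ne_top (ENNReal.mul_ne_top (logDini_add_one hLD n hm) profile_lintegral)
    (le_trans (lintegral_mono_set ?_) bound)
  exact Set.Ioo_subset_Ioo_right (by linarith [hR.2])
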